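/- Let S = {(x₁,1), (x₂,−1)} ⊆ ℝ^d × {−1,+1} with d(x₁,x₂) = 2γ* (so the max-margin of S is γ*). Let X₊' consist of N ≥ 16d points x₁ + z_j where z₁,…,z_N are i.i.d. uniform on the sphere of radius r in ℝ^d, and let S' = X₊' × {1}. If r ≥ (8e²√(2d)/π^{3/2})·γ*, then with probability at least 1 − 2e^{−d/6}, the augmented set S ∪ S' is not linearly separable. -/

import Mathlib

open scoped RealInnerProductSpace ENNReal Classical
open Metric Set MeasureTheory

noncomputable section

/-- `ℝ^d` with the Euclidean (ℓ²) structure. -/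
abbrev Euc (d : ℕ) := EuclideanSpace ℝ (Fin d)

/-- `X₊`: the set of points of `T` with label `1`. -/
def posPts {d : ℕ} (T : Set (Euc d × ℝ)) : Set (Euc d) := {x | (x, (1 : ℝ)) ∈ T}

/-- `X₋`: the set of points of `T` with label `-1`. -/
def negPts {d : ℕ} (T : Set (Euc d × ℝ)) : Set (Euc d) := {x | (x, (-1 : ℝ)) ∈ T}

/-- All labels in `T` are `±1`, i.e. `T ⊆ ℝ^d × {-1, +1}`. -/
def LabelsPM {d : ℕ} (T : Set (Euc d × ℝ)) : Prop := ∀ p ∈ T, p.2 = 1 ∨ p.2 = -1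

/-- `(w, b)` is a linear separator of the labeled set `T`:
`w ≠ 0` and `y(⟨w,x⟩ + b) ≥ 0` for all `(x,y) ∈ T`. -/
def IsLinSep {d : ℕ} (w : Euc d) (b : ℝ) (T : Set (Euc d × ℝ)) : Prop :=
  w ≠ 0 ∧ ∀ p ∈ T, p.2 * (⟪w, p.1⟫ + b) ≥ 0

/-- The hyperplane `H = {x | ⟨w,x⟩ + b = 0}` associated with `(w, b)`. -/
def hyperplane {d : ℕ} (w : Euc d) (b : ℝ) : Set (Euc d) := {x | ⟪w, x⟫ + b = 0}

/-- The margin `γ_{(w,b)}(S)`: infimum over `(x,y) ∈ S` of the distance from `x`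
to the hyperplane of `(w,b)`. -/
def linMargin {d : ℕ} (S : Set (Euc d × ℝ)) (w : Euc d) (b : ℝ) : ℝ :=
  ⨅ p : S, Metric.infDist (p : Euc d × ℝ).1 (hyperplane w b)

/-- `γ` is the max-margin of `S`: attained by some linear separator of `S`, and an upper
bound on the margin of every linear separator of `S`. -/
def IsMaxMargin {d : ℕ} (S : Set (Euc d × ℝ)) (γ : ℝ) : Prop :=
  (∃ w b, IsLinSep w b S ∧ linMargin S w b = γ) ∧
    ∀ w b, IsLinSep w b S → linMargin S w b ≤ γ

/-- The worst-case margin `α(S,S')` (an extended real): the infimum over all linear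
separators of `S ∪ S'` of their margin on `S`, or `-∞` if no separator exists. -/
def alpha {d : ℕ} (S S' : Set (Euc d × ℝ)) : EReal :=
  if ∃ w b, IsLinSep w b (S ∪ S') then
    sInf {m : EReal | ∃ w b, IsLinSep w b (S ∪ S') ∧ m = ((linMargin S w b : ℝ) : EReal)}
  else ⊥

/-- `S_r`: the set of labeled points obtained by moving a point of `S` by distance at
most `r`, keeping its label; i.e. `((X₊)_r × {1}) ∪ ((X₋)_r × {-1})`. -/
def ballAug {d : ℕ} (S : Set (Euc d × ℝ)) (r : ℝ) : Set (Euc d × ℝ) :=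
  {p | (p.2 = 1 ∧ Metric.infDist p.1 (posPts S) ≤ r) ∨
       (p.2 = -1 ∧ Metric.infDist p.1 (negPts S) ≤ r)}

/-- A `{±1}`-valued classifier. -/
def IsClassifier {d : ℕ} (f : Euc d → ℝ) : Prop := ∀ x, f x = 1 ∨ f x = -1

/-- `f` separates the labeled set `T`: `f x = y` for all `(x,y) ∈ T`. -/
def Separates {d : ℕ} (f : Euc d → ℝ) (T : Set (Euc d × ℝ)) : Prop :=
  ∀ p ∈ T, f p.1 = p.2

/-- The circumradius of `A`: the radius of the smallest closed ball containing `A`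
(as an extended nonnegative real). -/
def circumradius {d : ℕ} (A : Set (Euc d)) : ℝ≥0∞ :=
  ⨅ c : Euc d, ⨆ x ∈ A, edist c x

/-- `f` is `ε`-respectful of `T`: `f = 1` on the convex hull of any subset of `X₊(T)` of
circumradius at most `ε`, and `f = -1` on the convex hull of any subset of `X₋(T)` of
circumradius at most `ε`. (Taking `ε = ⊤` gives respectful classifiers.) -/
def RespectfulOf {d : ℕ} (ε : ℝ≥0∞) (f : Euc d → ℝ) (T : Set (Euc d × ℝ)) : Prop :=
  (∀ A ⊆ posPts T, circumradius A ≤ ε → ∀ x ∈ convexHull ℝ A, f x = 1) ∧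
  (∀ B ⊆ negPts T, circumradius B ≤ ε → ∀ x ∈ convexHull ℝ B, f x = -1)

/-- `R_ε(T)`, the set of `ε`-respectful classifiers of `T`. -/
def respectfulSet {d : ℕ} (ε : ℝ≥0∞) (T : Set (Euc d × ℝ)) : Set (Euc d → ℝ) :=
  {f | IsClassifier f ∧ RespectfulOf ε f T}

/-- The margin `γ_f(S)` of a classifier `f` on `S`:
`min_{(x,y) ∈ S} d(x, f⁻¹(-y))`. -/
def clsMargin {d : ℕ} (f : Euc d → ℝ) (S : Set (Euc d × ℝ)) : ℝ :=
  ⨅ p : S, Metric.infDist (p : Euc d × ℝ).1 (f ⁻¹' {-(p : Euc d × ℝ).2})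

/-- `γ_f(S,S')`: the margin of `f` on `S` if `f` separates `S ∪ S'`, and `-∞` otherwise. -/
def clsMarginAug {d : ℕ} (f : Euc d → ℝ) (S S' : Set (Euc d × ℝ)) : EReal :=
  if Separates f (S ∪ S') then ((clsMargin f S : ℝ) : EReal) else ⊥

/-- The distance `d(P, Q) = inf {d(a,b) | a ∈ P, b ∈ Q}` between two sets,
as an extended nonnegative real. -/
def setSepDist {d : ℕ} (P Q : Set (Euc d)) : ℝ≥0∞ :=
  ⨅ a ∈ P, EMetric.infEdist a Q

/-- The uniform (rotation-invariant) probability measure on the sphere of radius `r`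
centered at the origin in `ℝ^d`, obtained by normalizing the surface measure induced by
Lebesgue measure on the unit sphere and pushing forward by scaling by `r`. -/
def uniformSphere (d : ℕ) (r : ℝ) : Measure (Euc d) :=
  (((volume : Measure (Euc d)).toSphere) Set.univ)⁻¹ •
    ((((volume : Measure (Euc d)).toSphere).map (Subtype.val)).map (fun x => r • x))

end

section SphereLemmas
open scoped Pointwise

lemma us_apply {d : ℕ} (hd : 0 < d) (r : ℝ) {s : Set (Euc d)} (hs : MeasurableSet s) :
    uniformSphere d r s = (volume (ball (0 : Euc d) 1))⁻¹ *
      volume (Ioo (0:ℝ) 1 • {x : Euc d | ‖x‖ = 1 ∧ r • x ∈ s}) := by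
  have hm : Measurable (fun x : Euc d => r • x) := by fun_prop
  have hv : volume (ball (0 : Euc d) 1) ≠ 0 := (measure_ball_pos _ _ one_pos).ne'
  have hd0 : (d : ℝ≥0∞) ≠ 0 := by exact_mod_cast hd.ne'
  rw [uniformSphere, Measure.smul_apply, Measure.map_apply hm hs,
    Measure.map_apply measurable_subtype_coe (hm hs), Measure.toSphere_apply_univ,
    Measure.toSphere_apply' _ (measurable_subtype_coe (hm hs)), smul_eq_mul]
  have e : (Subtype.val '' ((Subtype.val : sphere (0 : Euc d) 1 → Euc d) ⁻¹'
      ((fun x : Euc d => r • x) ⁻¹' s))) = {x : Euc d | ‖x‖ = 1 ∧ r • x ∈ s} := by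
    ext x; simp [and_comm]
  rw [e, finrank_euclideanSpace_fin, ENNReal.mul_inv (Or.inl hd0) (Or.inl (by simp)), mul_mul_mul_comm,
    ENNReal.inv_mul_cancel hd0 (by simp), one_mul]

lemma us_prob {d : ℕ} (hd : 0 < d) (r : ℝ) : IsProbabilityMeasure (uniformSphere d r) := by
  constructor
  have : Nonempty (Fin d) := ⟨⟨0, hd⟩⟩
  have hm : Measurable (fun x : Euc d => r • x) := by fun_prop
  rw [uniformSphere, Measure.smul_apply, Measure.map_apply hm .univ,
    Measure.map_apply measurable_subtype_coe (hm .univ), smul_eq_mul]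
  simp only [preimage_univ]
  refine ENNReal.inv_mul_cancel ?_ (measure_ne_top _ _)
  rw [Ne, Measure.measure_univ_eq_zero]
  exact Measure.toSphere_ne_zero _

lemma us_pres {d : ℕ} (hd : 0 < d) (r : ℝ) (R : Euc d ≃ₗᵢ[ℝ] Euc d) :
    MeasurePreserving R (uniformSphere d r) (uniformSphere d r) := by
  have hR : Measurable R := R.continuous.measurable
  refine ⟨hR, ?_⟩
  ext s hs
  rw [Measure.map_apply hR hs, us_apply hd r hs, us_apply hd r (hR hs)]
  congr 1
  symm
  rw [← R.measurePreserving.measure_preimage_equiv (f := R.toMeasurableEquiv)]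
  congr 1
  ext x
  simp only [mem_smul, mem_preimage, mem_ofPred_eq]
  constructor
  · rintro ⟨a, ha, y, ⟨h1, h2⟩, h3⟩
    refine ⟨a, ha, R.symm y, ⟨by simpa using h1, by simpa using h2⟩, ?_⟩
    apply R.injective
    simpa using h3
  · rintro ⟨a, ha, y, ⟨h1, h2⟩, rfl⟩
    exact ⟨a, ha, R y, ⟨by simpa using h1, by simpa using h2⟩, by simp⟩

lemma us_sub_null {d : ℕ} (hd : 0 < d) {r : ℝ} (hr : r ≠ 0) (W : Submodule ℝ (Euc d)) (hW : W ≠ ⊤) :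
    uniformSphere d r W = 0 := by
  rw [us_apply hd r (Submodule.closed_of_finiteDimensional W).measurableSet]
  have : volume (Ioo (0:ℝ) 1 • {x : Euc d | ‖x‖ = 1 ∧ r • x ∈ (W : Set (Euc d))}) = 0 := by
    refine measure_mono_null ?_ (Measure.addHaar_submodule volume W hW)
    rintro x ⟨a, ha, y, ⟨h1, h2⟩, rfl⟩
    have : y ∈ W := by
      have := W.smul_mem r⁻¹ h2
      rwa [smul_smul, inv_mul_cancel₀ hr, one_smul] at this
    exact W.smul_mem a this
  rw [this, mul_zero]

/-- slab estimate -/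
lemma us_slab {d : ℕ} (hd : 0 < d) {r : ℝ} (hr : 0 < r) (e : Euc d) (he : ‖e‖ = 1)
    {t a T : ℝ} (ht : 0 < t) (ha : 0 < a) (hT : 0 < T) (haT : a ^ 2 + T ^ 2 = 1)
    (hbig : 2 ≤ T / t * a ^ (d - 1)) :
    uniformSphere d r {x | |⟪e, x⟫| ≤ r * t} ≤ 2⁻¹ := by
  have : Nonempty (Fin d) := ⟨⟨0, hd⟩⟩
  have hms : MeasurableSet {x : Euc d | |⟪e, x⟫| ≤ r * t} := by measurability
  rw [us_apply hd r hms]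
  set C := (Ioo (0:ℝ) 1 • {x : Euc d | ‖x‖ = 1 ∧ r • x ∈ {x : Euc d | |⟪e, x⟫| ≤ r * t}}) with hC
  set β := T / t with hβ
  have hβ0 : 0 < β := by positivity
  let f : Module.Dual ℝ (Euc d) := (innerSL ℝ e).toLinearMap
  let L : Euc d →ₗ[ℝ] Euc d := a • LinearMap.transvection f ((β / a - 1) • e)
  have hee : ⟪e, e⟫ = 1 := by rw [real_inner_self_eq_norm_sq, he]; norm_num
  have hdet : LinearMap.det L = β * a ^ (d - 1) := by
    simp only [L, LinearMap.det_smul, LinearMap.transvection.det, finrank_euclideanSpace_fin]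
    have : f ((β / a - 1) • e) = β / a - 1 := by simp [f, inner_smul_right, he]
    rw [this]
    obtain ⟨n, rfl⟩ := Nat.exists_eq_succ_of_ne_zero hd.ne'
    simp only [Nat.succ_eq_add_one, Nat.add_sub_cancel]
    field_simp
    ring
  have hsub : L '' C ⊆ closedBall 0 1 := by
    rintro _ ⟨_, ⟨c, hc, y, ⟨h1, h2⟩, rfl⟩, rfl⟩
    have hLx : ∀ x, L x = a • x + ((β - a) * ⟪e, x⟫) • e := by
      intro x
      simp only [L, LinearMap.smul_apply, LinearMap.transvection.apply, smul_add, smul_smul]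
      congr 2
      simp only [f]
      change a * (⟪e, x⟫ * (β / a - 1)) = _
      field_simp
    simp only [mem_closedBall, dist_zero_right]
    have hy : |⟪e, y⟫| ≤ t := by
      simp only [mem_ofPred_eq, inner_smul_right, abs_mul, abs_of_pos hr] at h2
      exact le_of_mul_le_mul_left h2 hr
    have hx : ‖c • y‖ ^ 2 ≤ 1 := by
      rw [norm_smul, h1, Real.norm_of_nonneg hc.1.le]; nlinarith [hc.1, hc.2]
    have hx2 : ⟪e, c • y⟫ ^ 2 ≤ t ^ 2 := by
      rw [inner_smul_right, ← sq_abs, abs_mul, abs_of_pos hc.1]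
      have h0 := abs_nonneg ⟪e, y⟫
      have : c * |⟪e, y⟫| ≤ t := by nlinarith [hc.1, hc.2]
      exact pow_le_pow_left₀ (mul_nonneg hc.1.le h0) this 2
    change ‖L (c • y)‖ ≤ 1
    generalize c • y = x at *
    have hn : ‖L x‖ ^ 2 = a ^ 2 * (‖x‖ ^ 2 - ⟪e, x⟫ ^ 2) + β ^ 2 * ⟪e, x⟫ ^ 2 := by
      rw [hLx, norm_add_sq_real, norm_smul, norm_smul, inner_smul_left, inner_smul_right, he, real_inner_comm]
      simp only [mul_pow, Real.norm_eq_abs, sq_abs, conj_trivial]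
      ring
    have hβt : β ^ 2 * t ^ 2 = T ^ 2 := by rw [hβ]; field_simp
    have : ‖L x‖ ^ 2 ≤ 1 := by
      rw [hn]
      nlinarith [mul_le_mul_of_nonneg_left hx2 (sq_nonneg β), mul_le_mul_of_nonneg_left hx (sq_nonneg a),
        mul_nonneg (sq_nonneg a) (sq_nonneg ⟪e, x⟫)]
    exact (sq_le_one_iff₀ (norm_nonneg _)).1 this
  have hvol : 2 * volume C ≤ volume (ball (0 : Euc d) 1) := by
    have h1 := measure_mono (μ := volume) hsub
    rw [Measure.addHaar_image_linearMap, hdet, Measure.addHaar_closedBall_eq_addHaar_ball] at h1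
    refine le_trans ?_ h1
    gcongr
    rw [show (2 : ℝ≥0∞) = ENNReal.ofReal 2 by simp]
    exact ENNReal.ofReal_le_ofReal (hbig.trans (le_abs_self _))
  have hv : volume (ball (0 : Euc d) 1) ≠ 0 := (measure_ball_pos _ _ one_pos).ne'
  have hv' : volume (ball (0 : Euc d) 1) ≠ ⊤ := measure_ball_lt_top.ne
  rw [mul_comm, ← div_eq_mul_inv]
  refine ENNReal.div_le_of_le_mul ?_
  rw [mul_comm, ← div_eq_mul_inv]
  rw [ENNReal.le_div_iff_mul_le (by simp) (by simp), mul_comm]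
  exact hvol

lemma us_half {d : ℕ} (hd : 0 < d) {r : ℝ} (e : Euc d) {τ : ℝ} (hτ : 0 ≤ τ)
    (h : uniformSphere d r {x | |⟪e, x⟫| ≤ τ} ≤ 2⁻¹) :
    1 / 4 ≤ (uniformSphere d r).real {x | ⟪e, x⟫ < - τ} := by
  have := us_prob hd r
  have hneg : (uniformSphere d r).real {x | τ < ⟪e, x⟫} = (uniformSphere d r).real {x | ⟪e, x⟫ < - τ} := by
    have := (us_pres hd r (LinearIsometryEquiv.neg ℝ)).measureReal_preimage
      (s := {x | ⟪e, x⟫ < - τ}) (MeasurableSet.nullMeasurableSet (by measurability))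
    rw [← this]
    congr 1
    ext x; simp
  have h1 : (uniformSphere d r).real {x | |⟪e, x⟫| ≤ τ} ≤ 1 / 2 := by
    have := ENNReal.toReal_mono (by simp) h
    simpa [Measure.real] using this
  have h2 : (uniformSphere d r).real univ = 1 := by simp
  have h3 : (univ : Set (Euc d)) ⊆ ({x | |⟪e, x⟫| ≤ τ} ∪ {x | τ < ⟪e, x⟫}) ∪ {x | ⟪e, x⟫ < - τ} := by
    intro x _
    simp only [mem_union, mem_ofPred_eq, abs_le]
    by_cases h : ⟪e, x⟫ < -τ
    · right; exact h
    · left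
      by_cases h' : τ < ⟪e, x⟫
      · right; exact h'
      · left; constructor <;> linarith
  have h4 := measureReal_mono (μ := uniformSphere d r) h3
  have h5 := measureReal_union_le (μ := uniformSphere d r) ({x | |⟪e, x⟫| ≤ τ} ∪ {x | τ < ⟪e, x⟫}) {x | ⟪e, x⟫ < - τ}
  have h6 := measureReal_union_le (μ := uniformSphere d r) ({x | |⟪e, x⟫| ≤ τ}) {x | τ < ⟪e, x⟫}
  linarith

end SphereLemmas

section GenPos

/-- extend a family by an extra vector `u` -/
def extFam {d N : ℕ} (u : Euc d) (z : Fin N → Euc d) : Option (Fin N) → Euc d := fun o => o.elim u z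

lemma pi_null_slice {d n : ℕ} (μ : Measure (Euc d)) [IsProbabilityMeasure μ] (j : Fin (n+1))
    (s : Set (Fin (n+1) → Euc d)) (hs : MeasurableSet s)
    (h : ∀ z, μ {x | Function.update z j x ∈ s} = 0) :
    (Measure.pi fun _ : Fin (n+1) => μ) s = 0 := by
  have hp := (measurePreserving_piFinSuccAbove (fun _ : Fin (n+1) => μ) j).symm
  rw [← hp.measure_preimage_equiv, Measure.prod_apply_symm (hp.measurable hs)]
  refine (lintegral_congr fun y => ?_).trans lintegral_zero
  refine Eq.trans ?_ (h (j.insertNth 0 y))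
  congr 1
  ext x
  simp only [mem_preimage, mem_ofPred_eq, MeasurableEquiv.piFinSuccAbove_symm_apply]
  rw [Fin.update_insertNth]
  rfl

lemma gp_ae {d N : ℕ} (hd : 0 < d) {r : ℝ} (hr : r ≠ 0) (u : Euc d) (hu : u ≠ 0)
    (t : Finset (Fin N)) (ht : t.card + 1 ≤ d) :
    ∀ᵐ z ∂(Measure.pi fun _ : Fin N => uniformSphere d r),
      LinearIndepOn ℝ (extFam u z) (↑(Finset.insertNone t) : Set (Option (Fin N))) := by
  have := us_prob hd r
  induction t using Finset.induction_on with
  | empty =>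
    refine Filter.Eventually.of_forall fun z => ?_
    have : (↑(Finset.insertNone (∅ : Finset (Fin N))) : Set (Option (Fin N))) = {none} := by
      ext x; cases x <;> simp
    rw [this, linearIndepOn_singleton_iff]
    exact hu
  | insert j t hj ih =>
    rw [Finset.card_insert_of_notMem hj] at ht
    have ih := ih (by omega)
    have hins : (↑(Finset.insertNone (insert j t)) : Set (Option (Fin N))) =
        insert (some j) (↑(Finset.insertNone t) : Set (Option (Fin N))) := by
      ext x; cases x <;> simp
    have hmeas : ∀ s : Finset (Option (Fin N)),
        MeasurableSet {z : Fin N → Euc d | LinearIndepOn ℝ (extFam u z) (s : Set (Option (Fin N)))} := by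
      intro s
      have hc : Continuous (fun (z : Fin N → Euc d) (i : (s : Set (Option (Fin N)))) => extFam u z i) := by
        refine continuous_pi fun i => ?_
        rcases i with ⟨_ | i, hi⟩
        · exact continuous_const
        · exact continuous_apply i
      exact ((isOpen_setOfPred_linearIndependent (𝕜 := ℝ)).preimage hc).measurableSet
    have key : (Measure.pi fun _ : Fin N => uniformSphere d r)
        ({z | LinearIndepOn ℝ (extFam u z) (↑(Finset.insertNone t) : Set (Option (Fin N)))} \
          {z | LinearIndepOn ℝ (extFam u z) (↑(Finset.insertNone (insert j t)) : Set (Option (Fin N)))}) = 0 := by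
      obtain ⟨n, rfl⟩ : ∃ n, N = n + 1 := ⟨N - 1, by have := j.2; omega⟩
      refine pi_null_slice _ j _ (MeasurableSet.diff (hmeas _) (hmeas _)) fun z => ?_
      set W := Submodule.span ℝ (extFam u z '' (↑(Finset.insertNone t) : Set (Option (Fin (n+1))))) with hW
      have hupd : ∀ x, EqOn (extFam u (Function.update z j x)) (extFam u z)
          (↑(Finset.insertNone t) : Set (Option (Fin (n+1)))) := by
        rintro x (_ | i) hi
        · rfl
        · have : i ≠ j := by rintro rfl; exact hj (by simpa using hi)
          simp [extFam, this]
      refine measure_mono_null ?_ (us_sub_null hd hr W ?_)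
      · rintro x ⟨h1, h2⟩
        simp only [mem_ofPred_eq] at h1 h2
        rw [hins, linearIndepOn_insert (by simpa using hj)] at h2
        by_contra hx
        refine h2 ⟨h1, ?_⟩
        rw [(hupd x).image_eq]
        simpa [extFam] using hx
      · intro htop
        have h1 := finrank_span_finset_le_card (R := ℝ) ((Finset.insertNone t).image (extFam u z))
        rw [Finset.coe_image] at h1
        change Module.finrank ℝ W ≤ _ at h1
        rw [htop, finrank_top, finrank_euclideanSpace_fin] at h1
        have h2 := Finset.card_image_le (s := Finset.insertNone t) (f := extFam u z)
        rw [Finset.card_insertNone] at h2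
        omega
    have key' := compl_mem_ae_iff.2 key
    filter_upwards [ih, key'] with z h1 h2
    by_contra h3
    exact h2 ⟨h1, h3⟩

lemma vc_bound {d N : ℕ} (hd : 0 < d) (u : Euc d) (z : Fin N → Euc d)
    (hgp : ∀ t : Finset (Fin N), t.card + 1 ≤ d →
      LinearIndepOn ℝ (extFam u z) (↑(Finset.insertNone t) : Set (Option (Fin N))))
    (s : Finset (Fin N))
    (hs : ∀ t ⊆ s, ∃ v : Euc d, v ≠ 0 ∧ ⟪u, v⟫ = 0 ∧
      ∀ j ∈ s, (j ∈ t → ⟪z j, v⟫ ≤ 0) ∧ (j ∉ t → 0 ≤ ⟪z j, v⟫)) : s.card ≤ d - 1 := by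
  by_contra hcon
  obtain ⟨K, hKs, hKd⟩ := Finset.exists_subset_card_eq (show d ≤ s.card by omega)
  have hdep : ¬ LinearIndepOn ℝ (extFam u z) (↑(Finset.insertNone K) : Set (Option (Fin N))) := by
    intro h
    have := LinearIndependent.fintype_card_le_finrank h
    have h2 : Fintype.card (↑(Finset.insertNone K) : Set (Option (Fin N))) = K.card + 1 := by
      rw [← Set.toFinset_card, Finset.toFinset_coe, Finset.card_insertNone]
    rw [h2, finrank_euclideanSpace_fin] at this
    omega
  rw [linearIndepOn_finset_iff] at hdep
  push Not at hdep
  obtain ⟨c, hc, i₀, hi₀, hci₀⟩ := hdep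
  have hcj : ∀ j ∈ K, c (some j) ≠ 0 := by
    intro j hj h0
    have h1 := hgp (K.erase j) (by rw [Finset.card_erase_of_mem hj]; omega)
    rw [linearIndepOn_finset_iff] at h1
    have h2 := h1 c (by
      rw [Finset.sum_insertNone] at hc ⊢
      rw [Finset.sum_erase _ (by rw [h0, zero_smul])]
      exact hc)
    apply hci₀
    rcases i₀ with _ | i
    · exact h2 none (by simp)
    · by_cases hij : i = j
      · rw [hij, h0]
      · exact h2 (some i) (by simpa [hij] using hi₀)
  obtain ⟨v, hv0, huv, hv⟩ := hs (K.filter fun j => 0 < c (some j)) ((Finset.filter_subset _ _).trans hKs)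
  have hle : ∀ j ∈ K, c (some j) * ⟪z j, v⟫ ≤ 0 := by
    intro j hj
    obtain ⟨h1, h2⟩ := hv j (hKs hj)
    by_cases h : 0 < c (some j)
    · exact mul_nonpos_of_nonneg_of_nonpos h.le (h1 (by simp [hj, h]))
    · exact mul_nonpos_of_nonpos_of_nonneg (not_lt.1 h) (h2 (by simp [h]))
  have hsum : ∑ j ∈ K, c (some j) * ⟪z j, v⟫ = 0 := by
    have := congrArg (fun x => ⟪x, v⟫) hc
    simp only [Finset.sum_insertNone, inner_add_left, sum_inner, inner_smul_left, inner_zero_left,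
      conj_trivial] at this
    simpa [extFam, huv] using this
  have hz : ∀ j ∈ K, ⟪z j, v⟫ = 0 := by
    intro j hj
    have := (Finset.sum_eq_zero_iff_of_nonpos hle).1 hsum j hj
    exact (mul_eq_zero.1 this).resolve_left (hcj j hj)
  obtain ⟨j, hj⟩ : K.Nonempty := Finset.card_pos.1 (by omega)
  have hcard : (K.erase j).card + 1 = d := by rw [Finset.card_erase_of_mem hj]; omega
  have hli := hgp (K.erase j) hcard.le
  have hspan := hli.linearIndependent.span_eq_top_of_card_eq_finrank' (by
    rw [← Set.toFinset_card, Finset.toFinset_coe, Finset.card_insertNone, hcard, finrank_euclideanSpace_fin])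
  apply hv0
  have hmem : v ∈ (⊤ : Submodule ℝ (Euc d)) := trivial
  rw [← hspan] at hmem
  have : ∀ x ∈ Submodule.span ℝ (range fun i : (↑(Finset.insertNone (K.erase j)) : Set (Option (Fin N))) => extFam u z i), ⟪x, v⟫ = 0 := by
    intro x hx
    induction hx using Submodule.span_induction with
    | mem x h =>
      obtain ⟨⟨_ | i, hi⟩, rfl⟩ := h
      · exact huv
      · exact hz i (by have := hi; simp at this; exact this.2)
    | zero => simp
    | add x y _ _ hx hy => rw [inner_add_left, hx, hy, add_zero]
    | smul a x _ hx => rw [inner_smul_left, hx, mul_zero]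
  exact inner_self_eq_zero.1 (this v hmem)

lemma count_bound {d N : ℕ} (hd : 0 < d) (u : Euc d) (z : Fin N → Euc d)
    (hgp : ∀ t : Finset (Fin N), t.card + 1 ≤ d →
      LinearIndepOn ℝ (extFam u z) (↑(Finset.insertNone t) : Set (Option (Fin N))))
    (J : Finset (Fin N)) (P : Finset (Fin N) → Prop)
    (hP : ∀ A, P A → ∃ v : Euc d, v ≠ 0 ∧ ⟪u, v⟫ = 0 ∧
      ∀ j ∈ J, (j ∈ A → ⟪z j, v⟫ ≤ 0) ∧ (j ∉ A → 0 ≤ ⟪z j, v⟫)) :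
    ((Finset.univ.filter P).card : ℝ) ≤ 2 ^ N * 2 ^ (d - 1) * (3 / 4 : ℝ) ^ J.card := by
  set F : Finset (Finset (Fin N)) := (Finset.univ.filter P).image (fun A => A ∩ J) with hF
  have h1 : F.card ≤ F.shatterer.card := F.card_le_card_shatterer
  have hsh : ∀ s ∈ F.shatterer, s ⊆ J ∧ s.card ≤ d - 1 := by
    intro s hs
    rw [Finset.mem_shatterer] at hs
    have hsJ : s ⊆ J := by
      obtain ⟨t, ht, hst⟩ := hs.exists_superset
      obtain ⟨A, -, rfl⟩ := Finset.mem_image.1 ht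
      exact hst.trans Finset.inter_subset_right
    refine ⟨hsJ, vc_bound hd u z hgp s fun t ht => ?_⟩
    obtain ⟨B, hB, hBt⟩ := hs ht
    obtain ⟨A, hA, rfl⟩ := Finset.mem_image.1 hB
    obtain ⟨v, hv0, huv, hv⟩ := hP A (Finset.mem_filter.1 hA).2
    refine ⟨v, hv0, huv, fun j hj => ?_⟩
    have : j ∈ t ↔ j ∈ A := by
      rw [← hBt]; simp [hj, hsJ hj]
    rw [this]
    exact hv j (hsJ hj)
  have h2 : (F.shatterer.card : ℝ) ≤ 2 ^ (d - 1) * (3 / 2 : ℝ) ^ J.card := by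
    have h := Finset.sum_pow_mul_eq_add_pow (1 / 2 : ℝ) 1 J
    norm_num at h
    rw [← h, Finset.mul_sum, Finset.card_eq_sum_ones, Nat.cast_sum]
    refine (Finset.sum_le_sum (fun s hs => ?_)).trans
      (Finset.sum_le_sum_of_subset_of_nonneg (fun s hs => Finset.mem_powerset.2 (hsh s hs).1) (fun s _ _ => by positivity))
    have hc := (hsh s hs).2
    obtain ⟨k, hk⟩ := Nat.exists_eq_add_of_le hc
    rw [hk, pow_add, mul_right_comm, ← mul_pow]
    norm_num
    exact one_le_pow₀ (by norm_num)
  have h3 : (Finset.univ.filter P).card ≤ F.card * 2 ^ (N - J.card) := by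
    have : (Finset.univ.filter P).card ≤ (F ×ˢ (Finset.univ \ J).powerset).card := by
      refine Finset.card_le_card_of_injOn (fun A => (A ∩ J, A \ J)) ?_ ?_
      · intro A hA
        simp only [Finset.coe_product, mem_prod, Finset.mem_coe, Finset.mem_powerset]
        exact ⟨Finset.mem_image.2 ⟨A, hA, rfl⟩, Finset.sdiff_subset_sdiff (Finset.subset_univ _) le_rfl⟩
      · intro A _ B _ h
        simp only [Prod.mk.injEq] at h
        ext x
        have e1 := congrArg (x ∈ ·) h.1
        have e2 := congrArg (x ∈ ·) h.2
        simp only [Finset.mem_inter, Finset.mem_sdiff, eq_iff_iff] at e1 e2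
        by_cases hx : x ∈ J
        · simpa [hx] using e1
        · simpa [hx] using e2
    refine this.trans_eq ?_
    rw [Finset.card_product, Finset.card_powerset, Finset.card_sdiff_of_subset (Finset.subset_univ _)]
    simp
  have hJ : J.card ≤ N := by simpa using Finset.card_le_univ J
  calc ((Finset.univ.filter P).card : ℝ) ≤ F.card * 2 ^ (N - J.card) := by exact_mod_cast h3
    _ ≤ (2 ^ (d - 1) * (3 / 2 : ℝ) ^ J.card) * 2 ^ (N - J.card) := by
      gcongr
      exact le_trans (by exact_mod_cast h1) h2
    _ = 2 ^ N * 2 ^ (d - 1) * (3 / 4 : ℝ) ^ J.card := by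
      generalize J.card = m at hJ
      obtain ⟨k, hk⟩ := Nat.exists_eq_add_of_le hJ
      rw [hk, Nat.add_sub_cancel_left, pow_add, show (3 / 2 : ℝ) = 2 * (3 / 4) by norm_num, mul_pow]
      ring

end GenPos

section Assembly

lemma refl_fix {d : ℕ} (u x : Euc d) : ⟪u, (ℝ ∙ u).reflection x⟫ = ⟪u, x⟫ := by
  have h : (ℝ ∙ u).reflection u = u :=
    Submodule.reflection_mem_subspace_eq_self (Submodule.mem_span_singleton_self u)
  have h2 := LinearIsometryEquiv.inner_map_map (ℝ ∙ u).reflection u x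
  rw [h] at h2
  exact h2

lemma refl_neg {d : ℕ} (u x v : Euc d) (h : ⟪u, v⟫ = 0) :
    ⟪(ℝ ∙ u).reflection x, v⟫ = - ⟪x, v⟫ := by
  have h : (ℝ ∙ u).reflection v = - v :=
    Submodule.reflection_mem_subspace_orthogonalComplement_eq_neg
      (Submodule.mem_orthogonal_singleton_iff_inner_right.2 h)
  have h2 := LinearIsometryEquiv.inner_map_map (ℝ ∙ u).reflection x v
  rw [h, inner_neg_right] at h2
  linarith

/-- the (compactified) bad event -/
def badSet {d : ℕ} (N : ℕ) (u : Euc d) : Set (Fin N → Euc d) :=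
  {z | ∃ w : Euc d, ‖w‖ = 1 ∧ 0 ≤ ⟪w, u⟫ ∧ ∀ j, 0 ≤ ⟪w, z j + u⟫}

lemma badSet_closed {d : ℕ} (N : ℕ) (u : Euc d) : IsClosed (badSet N u) := by
  have hK : CompactSpace (sphere (0 : Euc d) 1) := isCompact_iff_compactSpace.1 (isCompact_sphere _ _)
  have : badSet N u = Prod.snd '' {p : sphere (0 : Euc d) 1 × (Fin N → Euc d) |
      0 ≤ ⟪(p.1 : Euc d), u⟫ ∧ ∀ j, 0 ≤ ⟪(p.1 : Euc d), p.2 j + u⟫} := by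
    ext z
    simp only [badSet, mem_ofPred_eq, mem_image, Prod.exists, exists_eq_right, Subtype.exists,
      mem_sphere_iff_norm, sub_zero, exists_prop]
  rw [this]
  refine isClosedMap_snd_of_compactSpace _ ?_
  refine IsClosed.and ?_ ?_
  · exact isClosed_le continuous_const (by fun_prop)
  · simp only [ofPred_forall]
    refine isClosed_iInter fun j => isClosed_le continuous_const (by fun_prop)

/-- flipping the points in `A` -/
noncomputable def flipMap {d N : ℕ} (u : Euc d) (A : Finset (Fin N)) (z : Fin N → Euc d) : Fin N → Euc d :=
  fun j => (if j ∈ A then (ℝ ∙ u).reflection else LinearIsometryEquiv.refl ℝ (Euc d)) (z j)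

lemma bad_pattern {d N : ℕ} (u : Euc d) (hu : u ≠ 0) (z : Fin N → Euc d) (A : Finset (Fin N))
    (J : Finset (Fin N)) (hJ : ∀ j ∈ J, ⟪u, z j⟫ < - ‖u‖ ^ 2) (hJn : J.Nonempty)
    (hb : flipMap u A z ∈ badSet N u) :
    ∃ v : Euc d, v ≠ 0 ∧ ⟪u, v⟫ = 0 ∧
      ∀ j ∈ J, (j ∈ A → ⟪z j, v⟫ ≤ 0) ∧ (j ∉ A → 0 ≤ ⟪z j, v⟫) := by
  obtain ⟨w, hw1, hwu, hw⟩ := hb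
  have hu2 : 0 < ‖u‖ ^ 2 := by have := norm_pos_iff.2 hu; positivity
  set k := ⟪w, u⟫ / ‖u‖ ^ 2 with hk
  have hk0 : 0 ≤ k := by positivity
  have hku : k * ‖u‖ ^ 2 = ⟪w, u⟫ := by rw [hk]; field_simp
  have huv : ⟪u, w - k • u⟫ = 0 := by
    rw [inner_sub_right, inner_smul_right, real_inner_self_eq_norm_sq, hku, real_inner_comm, sub_self]
  have hfu : ∀ j, ⟪u, flipMap u A z j⟫ = ⟪u, z j⟫ := by
    intro j
    unfold flipMap
    split_ifs
    · exact refl_fix u _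
    · rfl
  have hge : ∀ j, - k * (‖u‖ ^ 2 + ⟪u, z j⟫) ≤ ⟪flipMap u A z j, w - k • u⟫ := by
    intro j
    have := hw j
    rw [inner_add_right, ← hku] at this
    rw [inner_sub_right, inner_smul_right]
    have e1 := real_inner_comm w (flipMap u A z j)
    have e2 := real_inner_comm u (flipMap u A z j)
    rw [e1, e2, hfu]
    linarith
  refine ⟨w - k • u, ?_, huv, ?_⟩
  · intro h0
    obtain ⟨j, hj⟩ := hJn
    have h1 := hge j
    rw [h0, inner_zero_right] at h1
    have h2 := hJ j hj
    have hk1 : k ≠ 0 := by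
      intro hk1
      rw [hk1, zero_smul, sub_zero] at h0
      rw [h0, norm_zero] at hw1
      exact zero_ne_one hw1
    have hk2 : 0 < k := lt_of_le_of_ne hk0 hk1.symm
    nlinarith
  · intro j hj
    have h1 := hge j
    have h2 := hJ j hj
    have h3 : 0 ≤ ⟪flipMap u A z j, w - k • u⟫ := le_trans (by nlinarith) h1
    constructor
    · intro hA
      simp only [flipMap, hA, if_true] at h3
      rw [refl_neg u _ _ huv] at h3
      linarith
    · intro hA
      simpa [flipMap, hA] using h3

lemma bad_le {d N : ℕ} (hd : 0 < d) {r : ℝ} (hr : r ≠ 0) (u : Euc d) (hu : u ≠ 0)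
    (hp : 1 / 4 ≤ (uniformSphere d r).real {x | ⟪u, x⟫ < - ‖u‖ ^ 2}) :
    (Measure.pi fun _ : Fin N => uniformSphere d r).real (badSet N u) ≤
      2 ^ (d - 1) * (15 / 16 : ℝ) ^ N := by
  have := us_prob hd r
  set P := (Measure.pi fun _ : Fin N => uniformSphere d r) with hP
  have hbm : MeasurableSet (badSet N u) := (badSet_closed N u).measurableSet
  have hfl : ∀ A, MeasurePreserving (flipMap (N := N) u A) P P := by
    intro A
    exact measurePreserving_pi _ _ (fun j => us_pres hd r _)
  set S : Set (Euc d) := {x | ⟪u, x⟫ < - ‖u‖ ^ 2} with hS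
  have hSm : MeasurableSet S := by rw [hS]; measurability
  let g : Euc d → ℝ := fun x => if x ∈ S then 3 / 4 else 1
  have hgm : Measurable g := Measurable.ite hSm measurable_const measurable_const
  have hg0 : ∀ x, 0 ≤ g x := by intro x; simp only [g]; split_ifs <;> norm_num
  have hg1 : ∀ x, g x ≤ 1 := by intro x; simp only [g]; split_ifs <;> norm_num
  have hgi : ∫ x, g x ∂(uniformSphere d r) = 1 - (uniformSphere d r).real S / 4 := by
    have : g = fun x => 1 - S.indicator (fun _ => (1 / 4 : ℝ)) x := by
      funext x
      by_cases h : x ∈ S <;> simp [g, h]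
      norm_num
    rw [this, integral_sub (integrable_const _) ((integrable_const _).indicator hSm),
      integral_indicator_const _ hSm]
    simp [div_eq_mul_inv]
  have hprod : ∫ z, ∏ j, g (z j) ∂P ≤ (15 / 16 : ℝ) ^ N := by
    rw [hP, integral_fintype_prod_eq_prod (fun _ : Fin N => g), Finset.prod_const, Finset.card_univ, Fintype.card_fin, hgi]
    have h1 : (uniformSphere d r).real S ≤ 1 := measureReal_le_one
    exact pow_le_pow_left₀ (by linarith) (by linarith) _
  have hprodint : Integrable (fun z : Fin N → Euc d => ∏ j, g (z j)) P := by
    refine Integrable.of_bound (C := 1) ?_ (Filter.Eventually.of_forall fun z => ?_)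
    · exact (Finset.measurable_prod _ fun j _ => hgm.comp (measurable_pi_apply j)).aestronglyMeasurable
    · rw [Real.norm_of_nonneg (Finset.prod_nonneg fun j _ => hg0 _)]
      exact Finset.prod_le_one (fun j _ => hg0 _) (fun j _ => hg1 _)
  have hgp : ∀ᵐ z ∂P, ∀ t : Finset (Fin N), t.card + 1 ≤ d →
      LinearIndepOn ℝ (extFam u z) (↑(Finset.insertNone t) : Set (Option (Fin N))) := by
    rw [ae_all_iff]
    intro t
    by_cases ht : t.card + 1 ≤ d
    · filter_upwards [gp_ae hd hr u hu t ht] with z hz _ using hz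
    · exact Filter.Eventually.of_forall fun z h => absurd h ht
  have hsum : (2 : ℝ) ^ N * P.real (badSet N u) =
      ∫ z, ∑ A : Finset (Fin N), (flipMap u A ⁻¹' badSet N u).indicator (fun _ => (1 : ℝ)) z ∂P := by
    rw [integral_finsetSum]
    · have : ∀ A : Finset (Fin N), ∫ z, (flipMap u A ⁻¹' badSet N u).indicator (fun _ => (1 : ℝ)) z ∂P
          = P.real (badSet N u) := by
        intro A
        rw [integral_indicator_const _ ((hfl A).measurable hbm), smul_eq_mul, mul_one,
          (hfl A).measureReal_preimage hbm.nullMeasurableSet]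
      simp [this]
    · intro A _
      exact (integrable_const _).indicator ((hfl A).measurable hbm)
  have hpt : ∀ᵐ z ∂P, ∑ A : Finset (Fin N), (flipMap u A ⁻¹' badSet N u).indicator (fun _ => (1 : ℝ)) z
      ≤ (2 ^ N * 2 ^ (d - 1)) * ∏ j, g (z j) := by
    filter_upwards [hgp] with z hz
    set J : Finset (Fin N) := Finset.univ.filter (fun j => z j ∈ S) with hJ
    have h1 : ∏ j, g (z j) = (3 / 4 : ℝ) ^ J.card := by
      simp only [g, Finset.prod_ite, Finset.prod_const, one_pow, mul_one]
      rfl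
    have h2 : ∑ A : Finset (Fin N), (flipMap u A ⁻¹' badSet N u).indicator (fun _ => (1 : ℝ)) z
        = ((Finset.univ.filter fun A => flipMap u A z ∈ badSet N u).card : ℝ) := by
      simp [Set.indicator_apply, Finset.sum_boole]
    rw [h1, h2]
    by_cases hJn : J.Nonempty
    · refine count_bound hd u z hz J _ fun A hA => bad_pattern u hu z A J ?_ hJn hA
      intro j hj
      exact (Finset.mem_filter.1 hj).2
    · rw [Finset.not_nonempty_iff_eq_empty.1 hJn, Finset.card_empty, pow_zero, mul_one]
      have h3 : (Finset.univ.filter fun A => flipMap u A z ∈ badSet N u).card ≤ 2 ^ N := by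
        refine (Finset.card_le_univ _).trans_eq ?_
        simp
      have h4 : (1 : ℝ) ≤ 2 ^ (d - 1) := one_le_pow₀ (by norm_num)
      have h5 : ((Finset.univ.filter fun A => flipMap u A z ∈ badSet N u).card : ℝ) ≤ 2 ^ N := by
        exact_mod_cast h3
      refine h5.trans (le_mul_of_one_le_right (by positivity) h4)
  have hint := integral_mono_ae (integrable_finsetSum _ fun A _ =>
      (integrable_const (1 : ℝ)).indicator ((hfl A).measurable hbm)) (hprodint.const_mul _) hpt
  rw [← hsum, integral_const_mul, mul_assoc] at hint
  have h6 := le_of_mul_le_mul_left hint (by positivity)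
  exact h6.trans (by gcongr)

lemma prob_quarter {d : ℕ} (hd : 2 ≤ d) (u : Euc d) (γ r : ℝ) (hγ : 0 < γ) (hu : ‖u‖ = 2 * γ)
    (hr : 8 * Real.exp 1 ^ 2 * Real.sqrt (2 * d) / Real.pi ^ ((3 : ℝ) / 2) * γ ≤ r) :
    0 < r ∧ 1 / 4 ≤ (uniformSphere d r).real {x | ⟪u, x⟫ < - ‖u‖ ^ 2} := by
  have hd2 : (2 : ℝ) ≤ d := by exact_mod_cast hd
  have hsd : 0 < Real.sqrt d := Real.sqrt_pos.2 (by linarith)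
  have hpi : Real.pi ^ ((3 : ℝ) / 2) ≤ 10 := by
    calc Real.pi ^ ((3 : ℝ) / 2) ≤ Real.pi ^ (2 : ℝ) :=
          Real.rpow_le_rpow_of_exponent_le (by linarith [Real.pi_gt_three]) (by norm_num)
      _ = Real.pi ^ 2 := by norm_cast
      _ ≤ 10 := by nlinarith [Real.pi_lt_d2, Real.pi_gt_three]
  have hpi0 : 0 < Real.pi ^ ((3 : ℝ) / 2) := Real.rpow_pos_of_pos Real.pi_pos _
  have hK : 7 ≤ 8 * Real.exp 1 ^ 2 * Real.sqrt 2 / Real.pi ^ ((3 : ℝ) / 2) := by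
    rw [le_div_iff₀ hpi0]
    have h1 : 7 ≤ Real.exp 1 ^ 2 := by nlinarith [Real.exp_one_gt_d9]
    have h2 : 1.4 ≤ Real.sqrt 2 := Real.le_sqrt_of_sq_le (by norm_num)
    nlinarith
  have hr7 : 7 * Real.sqrt d * γ ≤ r := by
    refine le_trans ?_ hr
    rw [Real.sqrt_mul (by norm_num)]
    have : 8 * Real.exp 1 ^ 2 * (Real.sqrt 2 * Real.sqrt d) / Real.pi ^ ((3 : ℝ) / 2) * γ =
      8 * Real.exp 1 ^ 2 * Real.sqrt 2 / Real.pi ^ ((3 : ℝ) / 2) * (Real.sqrt d * γ) := by ring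
    rw [this, mul_assoc]
    gcongr
  have hr0 : 0 < r := lt_of_lt_of_le (by positivity) hr7
  refine ⟨hr0, ?_⟩
  have hun : 0 < ‖u‖ := by rw [hu]; positivity
  have hd0 : 0 < d := by omega
  have ha2 : 0 < 1 - 1 / (d : ℝ) := by
    rw [sub_pos, div_lt_one (by linarith)]; linarith
  have hapow : (0.6 : ℝ) ≤ Real.sqrt (1 - 1 / d) ^ (d - 1) := by
    refine le_of_sq_le_sq ?_ (by positivity)
    rw [← pow_mul, mul_comm, pow_mul, Real.sq_sqrt ha2.le]
    obtain ⟨n, rfl⟩ : ∃ n, d = n + 1 := ⟨d - 1, by omega⟩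
    have hn : (0 : ℝ) < n := by have : 0 < n := by omega
                                exact_mod_cast this
    simp only [Nat.add_sub_cancel]
    have e1 : (1 - 1 / ((n + 1 : ℕ) : ℝ)) = (1 + 1 / (n : ℝ))⁻¹ := by
      push_cast; field_simp; ring
    have e2 : (1 + 1 / (n : ℝ)) ^ n ≤ Real.exp 1 := by
      have := Real.add_one_le_exp (1 / (n : ℝ))
      calc (1 + 1 / (n : ℝ)) ^ n ≤ Real.exp (1 / n) ^ n := by gcongr; linarith
        _ = Real.exp 1 := by rw [← Real.exp_nat_mul]; congr 1; field_simp
    rw [e1, inv_pow, le_inv_comm₀ (by norm_num) (by positivity)]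
    refine e2.trans ?_
    have := Real.exp_one_lt_d9
    norm_num at this ⊢
    linarith
  have hslab := us_slab hd0 hr0 ((‖u‖)⁻¹ • u) (by rw [norm_smul]; simp [hun.ne'])
    (t := ‖u‖ / r) (a := Real.sqrt (1 - 1 / d)) (T := (Real.sqrt d)⁻¹) (by positivity)
    (Real.sqrt_pos.2 ha2) (by positivity)
    (by rw [Real.sq_sqrt ha2.le, inv_pow, Real.sq_sqrt (by positivity)]; ring) (by
      have h1 : 3.5 ≤ (Real.sqrt d)⁻¹ / (‖u‖ / r) := by
        have e : (Real.sqrt d)⁻¹ / (‖u‖ / r) = r / (2 * γ * Real.sqrt d) := by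
          rw [hu]; field_simp
        rw [e, le_div_iff₀ (by positivity)]
        linarith
      nlinarith)
  rw [mul_div_cancel₀ _ hr0.ne'] at hslab
  have := us_half hd0 _ (norm_nonneg u) hslab
  convert this using 3
  ext x
  rw [inner_smul_left]
  simp only [map_inv₀, conj_trivial]
  rw [inv_mul_lt_iff₀ hun]
  ring_nf

end Assembly

/-- Theorem 8 of the paper: for `S = {(x₁,1),(x₂,-1)}` with
`d(x₁,x₂) = 2γ*`, if `X₊'` consists of `N ≥ 16d` uniform points on the sphere of radius
`r ≥ (8e²√(2d)/π^{3/2})γ*` around `x₁`, then with probability at least `1 - 2e^{-d/6}`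
the augmented set is not linearly separable. -/
theorem large_radius_breaks_separability {d : ℕ} (hd : 0 < d)
    (x₁ x₂ : Euc d) (γstar : ℝ) (hγ : 0 < γstar) (hdist : dist x₁ x₂ = 2 * γstar)
    (N : ℕ) (hN : 16 * d ≤ N) (r : ℝ)
    (hr : 8 * Real.exp 1 ^ 2 * Real.sqrt (2 * d) / Real.pi ^ ((3 : ℝ) / 2) * γstar ≤ r) :
    ENNReal.ofReal (1 - 2 * Real.exp (-(d : ℝ) / 6)) ≤
      (Measure.pi fun _ : Fin N => uniformSphere d r)
        {z | ¬ ∃ w b, IsLinSep w b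
          (({(x₁, (1 : ℝ)), (x₂, (-1 : ℝ))} : Set (Euc d × ℝ)) ∪
            Set.range fun j : Fin N => (x₁ + z j, (1 : ℝ)))} := by
  by_cases hd2 : d < 2
  · have hd1 : d = 1 := by omega
    have h1 := Real.add_one_le_exp (-(d : ℝ) / 6)
    have : 1 - 2 * Real.exp (-(d : ℝ) / 6) ≤ 0 := by
      rw [hd1] at h1 ⊢
      norm_num at h1 ⊢
      linarith
    rw [ENNReal.ofReal_of_nonpos this]
    exact zero_le
  have hd2 : 2 ≤ d := by omega
  have hun : ‖x₁ - x₂‖ = 2 * γstar := by rw [← dist_eq_norm, hdist]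
  have hu0 : x₁ - x₂ ≠ 0 := by
    rw [← norm_pos_iff, hun]; positivity
  obtain ⟨hr0, hq⟩ := prob_quarter hd2 (x₁ - x₂) γstar r hγ hun hr
  have hb := bad_le (N := N) hd hr0.ne' _ hu0 hq
  have := us_prob hd r
  have hbm : MeasurableSet (badSet N (x₁ - x₂)) := (badSet_closed N _).measurableSet
  have hsub : (badSet N (x₁ - x₂))ᶜ ⊆ {z | ¬ ∃ w b, IsLinSep w b
          (({(x₁, (1 : ℝ)), (x₂, (-1 : ℝ))} : Set (Euc d × ℝ)) ∪
            Set.range fun j : Fin N => (x₁ + z j, (1 : ℝ)))} := by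
    rintro z hz ⟨w, b, hw0, hw⟩
    apply hz
    have h1 := hw (x₁, 1) (by simp)
    have h2 := hw (x₂, -1) (by simp)
    have h3 : ∀ j, _ := fun j => hw (x₁ + z j, 1) (by simp)
    simp only [inner_add_right] at h1 h2 h3
    have hwn := norm_pos_iff.2 hw0
    refine ⟨‖w‖⁻¹ • w, by rw [norm_smul]; simp [hwn.ne'], ?_, fun j => ?_⟩
    · rw [real_inner_smul_left, inner_sub_right]
      refine mul_nonneg (by positivity) ?_
      linarith
    · rw [real_inner_smul_left, inner_add_right, inner_sub_right]
      refine mul_nonneg (by positivity) ?_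
      have := h3 j
      linarith
  refine le_trans ?_ (measure_mono hsub)
  rw [← ENNReal.ofReal_toReal (measure_ne_top _ (badSet N (x₁ - x₂))ᶜ)]
  refine ENNReal.ofReal_le_ofReal ?_
  change _ ≤ (Measure.pi fun _ : Fin N => uniformSphere d r).real (badSet N (x₁ - x₂))ᶜ
  rw [probReal_compl_eq_one_sub hbm]
  have hnum : 2 ^ (d - 1) * (15 / 16 : ℝ) ^ N ≤ Real.exp (-(d : ℝ) / 6) := by
    have e1 : (15 / 16 : ℝ) ^ N ≤ (15 / 16 : ℝ) ^ (16 * d) :=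
      pow_le_pow_of_le_one (by norm_num) (by norm_num) hN
    have e2 : (2 : ℝ) ^ (d - 1) ≤ 2 ^ d := pow_le_pow_right₀ (by norm_num) (by omega)
    calc 2 ^ (d - 1) * (15 / 16 : ℝ) ^ N ≤ 2 ^ d * (15 / 16 : ℝ) ^ (16 * d) := by gcongr
      _ = (2 * (15 / 16 : ℝ) ^ 16) ^ d := by rw [mul_pow, pow_mul]
      _ ≤ (Real.exp (-1 / 6)) ^ d := by
        gcongr
        have := Real.add_one_le_exp (-1 / 6 : ℝ)
        refine le_trans ?_ this
        norm_num
      _ = Real.exp (-(d : ℝ) / 6) := by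
        rw [← Real.exp_nat_mul]; congr 1; ring
  have := Real.exp_pos (-(d : ℝ) / 6)
  linarith
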